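/- Let a and b be real numbers with 0 ≤ a < 1/2 and b ≤ 0, at least one of which is nonzero. Then for any connected k-partite simple graph G with n vertices, where 2 ≤ k ≤ n, Gut_{a,b}(G) ≤ Gut_{a,b}(K_{n1,n2,…,nk}), where K_{n1,n2,…,nk} is the complete k-partite graph on n vertices whose part sizes satisfy |n_i − n_j| ≤ 1 for all 1 ≤ i < j ≤ k and n1 + n2 + ⋯ + nk = n. Equality holds if and only if G is isomorphic to this complete k-partite graph. -/

import Mathlib

open scoped Classical

/-- The general Gutman index `Gut_{a,b}(G)`: the sum, over all unordered pairs of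
distinct vertices `{u, v}`, of `(d(u)·d(v))^a · (dist(u,v))^b` (real powers). -/
noncomputable def gut {V : Type*} [Fintype V] (G : SimpleGraph V) (a b : ℝ) : ℝ :=
  ∑ e ∈ Finset.univ.filter (fun e : Sym2 V => ¬ e.IsDiag),
    Sym2.lift ⟨fun u v =>
      ((G.degree u : ℝ) * (G.degree v : ℝ)) ^ a * ((G.dist u v : ℝ)) ^ b,
      fun u v => by
        show ((G.degree u : ℝ) * (G.degree v : ℝ)) ^ a * ((G.dist u v : ℝ)) ^ b
            = ((G.degree v : ℝ) * (G.degree u : ℝ)) ^ a * ((G.dist v u : ℝ)) ^ b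
        rw [mul_comm ((G.degree u : ℝ)), SimpleGraph.dist_comm]⟩ e


lemma rpow_conc {a s t : ℝ} (ha : 0 ≤ a) (ha1 : a ≤ 1) (hs : 0 ≤ s) (hst : s + 2 ≤ t) :
    s ^ a + t ^ a ≤ (s + 1) ^ a + (t - 1) ^ a := by
  obtain ⟨-, hc⟩ := Real.concaveOn_rpow ha ha1
  have hd : 0 < t - s := by linarith
  have h1 := hc (x := s) (Set.mem_Ici.2 hs) (y := t) (Set.mem_Ici.2 (by linarith))
    (a := 1 - 1 / (t - s)) (b := 1 / (t - s))
    (by rw [sub_nonneg, div_le_one hd]; linarith) (by positivity) (by ring)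
  have h2 := hc (x := s) (Set.mem_Ici.2 hs) (y := t) (Set.mem_Ici.2 (by linarith))
    (a := 1 / (t - s)) (b := 1 - 1 / (t - s)) (by positivity)
    (by rw [sub_nonneg, div_le_one hd]; linarith) (by ring)
  simp only [smul_eq_mul] at h1 h2
  have e1 : (1 - 1 / (t - s)) * s + 1 / (t - s) * t = s + 1 := by field_simp; ring
  have e2 : 1 / (t - s) * s + (1 - 1 / (t - s)) * t = t - 1 := by field_simp; ring
  rw [e1] at h1
  rw [e2] at h2
  linarith

/-- the key inequality for moving one vertex from a big part to a small part -/
lemma move_ineq {a β n x y R : ℝ} (ha : 0 ≤ a) (ha1 : a ≤ 1) (hβ0 : 0 < β) (hβ1 : β ≤ 1)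
    (hab : a ≠ 0 ∨ β ≠ 1) (hy : 0 ≤ y) (hyi : 0 ≤ y * (y - 1)) (hxy : y + 2 ≤ x) (hxn : x < n) (hR : 0 ≤ R) :
    (R + (x * (n - x) ^ a + y * (n - y) ^ a)) ^ 2
      - (1 - β) * (x ^ 2 * ((n - x) ^ a) ^ 2 + y ^ 2 * ((n - y) ^ a) ^ 2)
      - β * (x * ((n - x) ^ a) ^ 2 + y * ((n - y) ^ a) ^ 2) <
    (R + ((x - 1) * (n - (x - 1)) ^ a + (y + 1) * (n - (y + 1)) ^ a)) ^ 2
      - (1 - β) * ((x - 1) ^ 2 * ((n - (x - 1)) ^ a) ^ 2 + (y + 1) ^ 2 * ((n - (y + 1)) ^ a) ^ 2)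
      - β * ((x - 1) * ((n - (x - 1)) ^ a) ^ 2 + (y + 1) * ((n - (y + 1)) ^ a) ^ 2) := by
  have hs : 0 < n - x := by linarith
  have eX : n - (x - 1) = (n - x) + 1 := by ring
  have eY : n - (y + 1) = (n - y) - 1 := by ring
  have hσ : (n - x) ^ a + (n - y) ^ a ≤ (n - (x - 1)) ^ a + (n - (y + 1)) ^ a := by
    rw [eX, eY]; exact rpow_conc ha ha1 hs.le (by linarith)
  have hπ : (n - x) ^ a * (n - y) ^ a ≤ (n - (x - 1)) ^ a * (n - (y + 1)) ^ a := by
    rw [← Real.mul_rpow (by linarith) (by linarith), ← Real.mul_rpow (by linarith) (by linarith)]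
    apply Real.rpow_le_rpow (mul_nonneg (by linarith) (by linarith)) _ ha
    nlinarith
  have hX0 : 0 < (n - x) ^ a := Real.rpow_pos_of_pos hs _
  have hY0 : 0 < (n - y) ^ a := Real.rpow_pos_of_pos (by linarith) _
  have hXX : (n - x) ^ a ≤ (n - (x - 1)) ^ a := Real.rpow_le_rpow hs.le (by linarith) ha
  have hXY : (n - x) ^ a ≤ (n - (y + 1)) ^ a := Real.rpow_le_rpow hs.le (by linarith) ha
  have hXX' : a ≠ 0 → (n - x) ^ a < (n - (x - 1)) ^ a := fun h =>
    Real.rpow_lt_rpow hs.le (by linarith) (lt_of_le_of_ne ha (Ne.symm h))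
  generalize (n - x) ^ a = X at *
  generalize (n - y) ^ a = Y at *
  generalize (n - (x - 1)) ^ a = X' at *
  generalize (n - (y + 1)) ^ a = Y' at *
  have hd : 0 ≤ x - y - 2 := by linarith
  -- sums
  have hp : x * X + y * Y ≤ (x - 1) * X' + (y + 1) * Y' := by
    have h1 := mul_le_mul_of_nonneg_left hσ hy
    have h2 := mul_le_mul_of_nonneg_left hXX (show 0 ≤ x - y - 1 by linarith)
    nlinarith
  have hRp := mul_le_mul_of_nonneg_left hp hR
  -- D1
  have hD1 : x * y * (X * Y) < (x - 1) * (y + 1) * (X' * Y') := by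
    have h0 : 0 < X * Y := mul_pos hX0 hY0
    have h1 : x * y < (x - 1) * (y + 1) := by nlinarith
    have h2 : 0 ≤ x * y := mul_nonneg (by linarith) hy
    calc x * y * (X * Y) < (x - 1) * (y + 1) * (X * Y) := mul_lt_mul_of_pos_right h1 h0
      _ ≤ _ := mul_le_mul_of_nonneg_left hπ (by linarith)
  -- D0
  have hσ2 : (X + Y) ^ 2 ≤ (X' + Y') ^ 2 := pow_le_pow_left₀ (by linarith) hσ 2
  have q1 : y * (X * Y) ≤ y * (X' * Y') := mul_le_mul_of_nonneg_left hπ hy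
  have q2 : y * (y - 1) * (X + Y) ^ 2 ≤ y * (y - 1) * (X' + Y') ^ 2 :=
    mul_le_mul_of_nonneg_left hσ2 hyi
  have q3 : y * ((X + Y) * ((x - y) * X)) ≤ y * ((X' + Y') * ((x - y - 1) * X' + Y')) := by
    apply mul_le_mul_of_nonneg_left _ hy
    apply mul_le_mul hσ _ (mul_nonneg (by linarith) hX0.le) (by linarith)
    have h2 := mul_le_mul_of_nonneg_left hXX (show 0 ≤ x - y - 1 by linarith)
    nlinarith
  have q4 : (x - y - 1) * (x - y - 2) * X ^ 2 ≤ (x - y - 1) * (x - y - 2) * X' ^ 2 :=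
    mul_le_mul_of_nonneg_left (pow_le_pow_left₀ hX0.le hXX 2) (mul_nonneg (by linarith) hd)
  have q5 : (x - y - 1) * (X * X) ≤ (x - y - 1) * (X' * Y') :=
    mul_le_mul_of_nonneg_left (mul_le_mul hXX hXY hX0.le (by linarith)) (by linarith)
  have q5' : a ≠ 0 → (x - y - 1) * (X * X) < (x - y - 1) * (X' * Y') := fun h =>
    mul_lt_mul_of_pos_left (mul_lt_mul (hXX' h) hXY hX0 (by linarith)) (by linarith)
  have hD0 : (x * X + y * Y) ^ 2 - (x * X ^ 2 + y * Y ^ 2) ≤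
      ((x - 1) * X' + (y + 1) * Y') ^ 2 - ((x - 1) * X' ^ 2 + (y + 1) * Y' ^ 2) := by
    linear_combination 2 * q1 + q2 + 2 * q3 + q4 + 2 * q5
  have hD0' : a ≠ 0 → (x * X + y * Y) ^ 2 - (x * X ^ 2 + y * Y ^ 2) <
      ((x - 1) * X' + (y + 1) * Y') ^ 2 - ((x - 1) * X' ^ 2 + (y + 1) * Y' ^ 2) := by
    intro h
    have := q5' h
    linear_combination 2 * q1 + q2 + 2 * q3 + q4 + 2 * this
  rcases hab with h | h
  · have e0 := mul_lt_mul_of_pos_left (hD0' h) hβ0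
    have e1 := mul_le_mul_of_nonneg_left hD1.le (sub_nonneg.2 hβ1)
    linear_combination e0 + 2 * e1 + 2 * hRp
  · have e0 := mul_le_mul_of_nonneg_left hD0 hβ0.le
    have e1 := mul_lt_mul_of_pos_left hD1 (sub_pos.2 (lt_of_le_of_ne hβ1 h))
    linear_combination e0 + 2 * e1 + 2 * hRp


noncomputable def FF {k : ℕ} (n : ℕ) (a β : ℝ) (x : Fin k → ℕ) : ℝ :=
  (∑ i, (x i : ℝ) * ((n : ℝ) - x i) ^ a) ^ 2
    - (1 - β) * ∑ i, (x i : ℝ) ^ 2 * (((n : ℝ) - x i) ^ a) ^ 2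
    - β * ∑ i, (x i : ℝ) * (((n : ℝ) - x i) ^ a) ^ 2

lemma FF_perm {k : ℕ} (n : ℕ) (a β : ℝ) (x : Fin k → ℕ) (σ : Equiv.Perm (Fin k)) :
    FF n a β (x ∘ σ) = FF n a β x := by
  unfold FF
  simp only [Function.comp]
  rw [Equiv.sum_comp σ (fun i => (x i : ℝ) * ((n : ℝ) - x i) ^ a),
    Equiv.sum_comp σ (fun i => (x i : ℝ) ^ 2 * (((n : ℝ) - x i) ^ a) ^ 2),
    Equiv.sum_comp σ (fun i => (x i : ℝ) * (((n : ℝ) - x i) ^ a) ^ 2)]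

noncomputable def mv {k : ℕ} (x : Fin k → ℕ) (i j : Fin k) : Fin k → ℕ :=
  Function.update (Function.update x i (x i - 1)) j (x j + 1)

lemma sum_split {k : ℕ} {M : Type*} [AddCommMonoid M] (h : Fin k → M) {i j : Fin k} (hij : i ≠ j) :
    ∑ l, h l = (∑ l ∈ (Finset.univ.erase i).erase j, h l) + (h i + h j) := by
  rw [← Finset.sum_erase_add _ _ (Finset.mem_univ i),
    ← Finset.sum_erase_add _ _ (Finset.mem_erase.2 ⟨hij.symm, Finset.mem_univ j⟩)]
  rw [add_assoc, add_comm (h j)]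

lemma sum_mv {k : ℕ} {M : Type*} [AddCommMonoid M] (h : ℕ → M) (x : Fin k → ℕ) {i j : Fin k} (hij : i ≠ j) :
    ∑ l, h (mv x i j l) =
      (∑ l ∈ (Finset.univ.erase i).erase j, h (x l)) + (h (x i - 1) + h (x j + 1)) := by
  rw [sum_split _ hij]
  congr 1
  · apply Finset.sum_congr rfl
    intro l hl
    simp only [Finset.mem_erase] at hl
    simp [mv, hl.1, hl.2.1]
  · simp [mv, hij]

lemma FF_mv {k : ℕ} (n : ℕ) {a β : ℝ} (ha : 0 ≤ a) (ha1 : a ≤ 1) (hβ0 : 0 < β) (hβ1 : β ≤ 1)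
    (hab : a ≠ 0 ∨ β ≠ 1) (x : Fin k → ℕ) (hx : ∀ l, x l < n) {i j : Fin k}
    (hij : x j + 2 ≤ x i) : FF n a β x < FF n a β (mv x i j) := by
  have hne : i ≠ j := by rintro rfl; omega
  unfold FF
  rw [sum_mv (fun m => (m : ℝ) * ((n : ℝ) - m) ^ a) x hne,
    sum_mv (fun m => (m : ℝ) ^ 2 * (((n : ℝ) - m) ^ a) ^ 2) x hne,
    sum_mv (fun m => (m : ℝ) * (((n : ℝ) - m) ^ a) ^ 2) x hne]
  rw [sum_split (fun l => (x l : ℝ) * ((n : ℝ) - x l) ^ a) hne,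
    sum_split (fun l => (x l : ℝ) ^ 2 * (((n : ℝ) - x l) ^ a) ^ 2) hne,
    sum_split (fun l => (x l : ℝ) * (((n : ℝ) - x l) ^ a) ^ 2) hne]
  have hR : 0 ≤ ∑ l ∈ (Finset.univ.erase i).erase j, (x l : ℝ) * ((n : ℝ) - x l) ^ a := by
    apply Finset.sum_nonneg
    intro l _
    have : (x l : ℝ) < n := by exact_mod_cast hx l
    exact mul_nonneg (Nat.cast_nonneg _) (Real.rpow_nonneg (by linarith) _)
  have hc : ((x i - 1 : ℕ) : ℝ) = (x i : ℝ) - 1 := by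
    rw [Nat.cast_sub (by omega)]; simp
  have hyi : (0 : ℝ) ≤ (x j : ℝ) * ((x j : ℝ) - 1) := by
    rcases Nat.eq_zero_or_pos (x j) with h | h
    · simp [h]
    · have : (1 : ℝ) ≤ x j := by exact_mod_cast h
      exact mul_nonneg (by linarith) (by linarith)
  have := move_ineq (n := n) ha ha1 hβ0 hβ1 hab (Nat.cast_nonneg (x j)) hyi
    (x := x i) (by exact_mod_cast hij) (by exact_mod_cast hx i) hR
  rw [hc]
  push_cast
  linarith

lemma bal_count {k : ℕ} (hk : 0 < k) (n : ℕ) (y : Fin k → ℕ) (hs : ∑ i, y i = n)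
    (hb : ∀ i j, y i ≤ y j + 1) (v : ℕ) :
    (Finset.univ.filter (fun i => y i = v)).card =
      if v = n / k then k - n % k else if v = n / k + 1 then n % k else 0 := by
  have : Nonempty (Fin k) := ⟨⟨0, hk⟩⟩
  obtain ⟨i0, -, hi0⟩ := Finset.exists_min_image Finset.univ y Finset.univ_nonempty
  set m := y i0 with hm
  have h01 : ∀ i, y i = m ∨ y i = m + 1 := by
    intro i
    have := hi0 i (Finset.mem_univ _)
    have := hb i i0
    omega
  set r := (Finset.univ.filter (fun i => y i = m + 1)).card with hr
  have hsum : n = k * m + r := by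
    rw [← hs, hr, Finset.card_filter]
    calc ∑ i, y i = ∑ i, (m + if y i = m + 1 then 1 else 0) := by
          apply Finset.sum_congr rfl
          intro i _
          rcases h01 i with h | h <;> simp [h]
      _ = _ := by rw [Finset.sum_add_distrib]; simp
  have hrk : r < k := by
    have : r < (Finset.univ : Finset (Fin k)).card := by
      apply Finset.card_lt_card
      rw [Finset.ssubset_univ_iff]
      intro h
      have := Finset.mem_univ i0
      rw [← h] at this
      simp at this
      omega
    simpa using this
  have hdiv : n / k = m := by
    rw [hsum, Nat.mul_add_div hk, Nat.div_eq_of_lt hrk, add_zero]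
  have hmod : n % k = r := by
    rw [hsum, Nat.mul_add_mod, Nat.mod_eq_of_lt hrk]
  rw [hdiv, hmod]
  have hcompl : (Finset.univ.filter (fun i => y i = m)).card = k - r := by
    have h := Finset.card_filter_add_card_filter_not (s := (Finset.univ : Finset (Fin k)))
      (fun i => y i = m)
    have h2 : Finset.univ.filter (fun i => ¬ y i = m) = Finset.univ.filter (fun i => y i = m + 1) := by
      ext i
      have := h01 i
      simp
      omega
    rw [h2] at h
    simp at h
    omega
  split_ifs with h1 h2
  · rw [h1]; exact hcompl
  · rw [h2]
  · rw [Finset.card_eq_zero, Finset.filter_eq_empty_iff]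
    intro i _ h
    have := h01 i
    omega

lemma bal_perm {k : ℕ} (hk : 0 < k) (n : ℕ) (x y : Fin k → ℕ) (hx : ∑ i, x i = n)
    (hy : ∑ i, y i = n) (hxb : ∀ i j, x i ≤ x j + 1) (hyb : ∀ i j, y i ≤ y j + 1) :
    ∃ σ : Equiv.Perm (Fin k), x = y ∘ σ := by
  have e : ∀ v, Nonempty ({i // x i = v} ≃ {i // y i = v}) := by
    intro v
    rw [← Fintype.card_eq, Fintype.card_subtype, Fintype.card_subtype,
      bal_count hk n x hx hxb, bal_count hk n y hy hyb]
  replace e := fun v => (e v).some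
  refine ⟨(Equiv.sigmaFiberEquiv x).symm.trans ((Equiv.sigmaCongrRight e).trans
    (Equiv.sigmaFiberEquiv y)), ?_⟩
  ext i
  exact ((e (x i)) ⟨i, rfl⟩).2.symm

lemma FF_max {k : ℕ} (hk : 0 < k) (n : ℕ) {a β : ℝ} (ha : 0 ≤ a) (ha1 : a ≤ 1) (hβ0 : 0 < β)
    (hβ1 : β ≤ 1) (hab : a ≠ 0 ∨ β ≠ 1) (p : Fin k → ℕ) (hp : ∑ i, p i = n)
    (hpb : ∀ i j, p i ≤ p j + 1) (N : ℕ) : ∀ (x : Fin k → ℕ), ∑ i, (x i) ^ 2 = N →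
    ∑ i, x i = n → (∀ l, x l < n) →
    FF n a β x ≤ FF n a β p ∧ (FF n a β x = FF n a β p → ∃ σ : Equiv.Perm (Fin k), x = p ∘ σ) := by
  induction N using Nat.strong_induction_on with
  | _ N ih =>
  intro x hN hs hlt
  by_cases hb : ∀ i j, x i ≤ x j + 1
  · obtain ⟨σ, rfl⟩ := bal_perm hk n x p hs hp hb hpb
    exact ⟨(FF_perm ..).le, fun _ => ⟨σ, rfl⟩⟩
  · push Not at hb
    obtain ⟨i, j, hij⟩ := hb
    have hne : i ≠ j := by rintro rfl; omega
    have hlt' := FF_mv n ha ha1 hβ0 hβ1 hab x hlt (i := i) (j := j) (by omega)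
    have h1 := sum_mv (fun m => m ^ 2) x hne
    have h2 := sum_split (fun l => (x l) ^ 2) hne
    have h3 := sum_mv (fun m => m) x hne
    have h4 := sum_split (fun l => (x l)) hne
    have hsq : (x i - 1) ^ 2 + (x j + 1) ^ 2 < x i ^ 2 + x j ^ 2 := by
      obtain ⟨d, hd⟩ : ∃ d, x i = x j + 2 + d := ⟨x i - (x j + 2), by omega⟩
      rw [hd, show x j + 2 + d - 1 = x j + 1 + d by omega]
      nlinarith
    have := ih (∑ l, (mv x i j l) ^ 2) (by omega) (mv x i j) rfl
      (by omega) (by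
        intro l
        have hi := hlt i
        have hl := hlt l
        unfold mv
        simp only [Function.update_apply]
        split_ifs <;> omega)
    exact ⟨(hlt'.trans_le this.1).le, fun h => absurd h (hlt'.trans_le this.1).ne⟩

lemma two_sum_sym2 {V : Type*} [Fintype V] (f : Sym2 V → ℝ) :
    2 * ∑ e ∈ Finset.univ.filter (fun e : Sym2 V => ¬ e.IsDiag), f e =
      ∑ u, ∑ v, f s(u, v) - ∑ u, f s(u, u) := by
  have h1 : ∑ q ∈ Finset.univ.filter (fun q : V × V => q.1 ≠ q.2), f s(q.1, q.2) =
      ∑ e ∈ Finset.univ.filter (fun e : Sym2 V => ¬ e.IsDiag), 2 * f e := by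
    rw [← Finset.sum_fiberwise_of_maps_to (g := fun q : V × V => s(q.1, q.2))
      (t := Finset.univ.filter (fun e : Sym2 V => ¬ e.IsDiag))]
    · apply Finset.sum_congr rfl
      intro e he
      induction e using Sym2.ind with
      | _ u v =>
      simp only [Finset.mem_filter, Finset.mem_univ, true_and, Sym2.mk_isDiag_iff] at he
      have : (Finset.univ.filter (fun q : V × V => q.1 ≠ q.2)).filter
          (fun q => s(q.1, q.2) = s(u, v)) = {(u, v), (v, u)} := by
        ext ⟨q1, q2⟩
        simp only [Finset.mem_filter, Finset.mem_univ, true_and, Sym2.eq_iff,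
          Finset.mem_insert, Finset.mem_singleton, Prod.mk.injEq]
        constructor
        · rintro ⟨_, h⟩; exact h
        · rintro (⟨rfl, rfl⟩ | ⟨rfl, rfl⟩)
          · exact ⟨he, Or.inl ⟨rfl, rfl⟩⟩
          · exact ⟨fun h => he h.symm, Or.inr ⟨rfl, rfl⟩⟩
      rw [this, Finset.sum_pair (by simp; intro h; exact absurd h he), Sym2.eq_swap (a := v)]
      ring
    · intro q hq
      simpa using hq
  have h2 : ∑ u, ∑ v, f s(u, v) = ∑ q : V × V, f s(q.1, q.2) := by
    rw [Fintype.sum_prod_type]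
  have h3 := Finset.sum_filter_add_sum_filter_not (Finset.univ : Finset (V × V))
    (fun q : V × V => q.1 ≠ q.2) (fun q => f s(q.1, q.2))
  have h4 : ∑ q ∈ Finset.univ.filter (fun q : V × V => ¬ q.1 ≠ q.2), f s(q.1, q.2) =
      ∑ u, f s(u, u) := by
    symm
    apply Finset.sum_bij (fun u _ => (u, u))
    · simp
    · simp
    · rintro ⟨u, v⟩ h
      simp at h
      exact ⟨u, by simp, by simp [h]⟩
    · simp
  rw [Finset.mul_sum, ← h1, h2, ← h3, h4]
  ring

noncomputable def sz {V : Type*} [Fintype V] {k : ℕ} (c : V → Fin k) (i : Fin k) : ℕ :=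
  (Finset.univ.filter (fun v => c v = i)).card

noncomputable def wt {V : Type*} [Fintype V] {k : ℕ} (c : V → Fin k) (a : ℝ) (i : Fin k) : ℝ :=
  ((Fintype.card V : ℝ) - sz c i) ^ a

noncomputable def gterm {V : Type*} [Fintype V] {k : ℕ} (c : V → Fin k) (a β : ℝ) : Sym2 V → ℝ :=
  Sym2.lift ⟨fun u v => (wt c a (c u) * wt c a (c v)) * (if c u = c v then β else 1),
    fun u v => by
      show wt c a (c u) * wt c a (c v) * (if c u = c v then β else 1)
        = wt c a (c v) * wt c a (c u) * (if c v = c u then β else 1)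
      rw [mul_comm (wt c a (c u))]
      congr 1
      simp only [eq_comm]⟩

lemma sum_color {V : Type*} [Fintype V] {k : ℕ} (c : V → Fin k) (h : Fin k → ℝ) :
    ∑ v, h (c v) = ∑ i, (sz c i : ℝ) * h i := by
  rw [← Finset.sum_fiberwise (s := Finset.univ) (g := c)]
  apply Finset.sum_congr rfl
  intro i _
  rw [Finset.sum_congr rfl (g := fun _ => h i)]
  · simp [sz]
  · intro v hv
    rw [(Finset.mem_filter.1 hv).2]

lemma sz_sum {V : Type*} [Fintype V] {k : ℕ} (c : V → Fin k) : ∑ i, sz c i = Fintype.card V := by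
  have := sum_color c (fun _ => 1)
  simp at this
  exact_mod_cast this.symm

lemma gB_eq {V : Type*} [Fintype V] {k : ℕ} (c : V → Fin k) (a β : ℝ) :
    2 * ∑ e ∈ Finset.univ.filter (fun e : Sym2 V => ¬ e.IsDiag), gterm c a β e =
      FF (Fintype.card V) a β (sz c) := by
  rw [two_sum_sym2]
  simp only [gterm, Sym2.lift_mk, if_true]
  have h1 : ∀ u, ∑ v, wt c a (c u) * wt c a (c v) * (if c u = c v then β else 1) =
      wt c a (c u) * ∑ i, (sz c i : ℝ) * wt c a i
        - (1 - β) * ((sz c (c u)) * (wt c a (c u)) ^ 2) := by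
    intro u
    rw [sum_color c (fun i => wt c a (c u) * wt c a i * (if c u = i then β else 1)),
      Finset.mul_sum]
    have : (1 - β) * ((sz c (c u)) * (wt c a (c u)) ^ 2) =
      ∑ i, if c u = i then (1 - β) * ((sz c i) * (wt c a i) ^ 2) else 0 := by simp
    rw [this, ← Finset.sum_sub_distrib]
    apply Finset.sum_congr rfl
    intro i _
    split_ifs with h
    · rw [h]; ring
    · ring
  simp only [h1]
  rw [Finset.sum_sub_distrib, ← Finset.mul_sum, ← Finset.sum_mul,
    sum_color c (wt c a), sum_color c (fun i => (sz c i : ℝ) * (wt c a i) ^ 2),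
    sum_color c (fun i => wt c a i * wt c a i * β)]
  unfold FF
  have e1 : ∑ i, (sz c i : ℝ) * ((sz c i : ℝ) * (wt c a i) ^ 2) =
      ∑ i, (sz c i : ℝ) ^ 2 * (wt c a i) ^ 2 := Finset.sum_congr rfl fun i _ => by ring
  have e2 : ∑ i, (sz c i : ℝ) * (wt c a i * wt c a i * β) =
      β * ∑ i, (sz c i : ℝ) * (wt c a i) ^ 2 := by
    rw [Finset.mul_sum]; exact Finset.sum_congr rfl fun i _ => by ring
  rw [e1, e2]
  simp only [wt]
  ring

lemma card_ne {V : Type*} [Fintype V] {k : ℕ} (c : V → Fin k) (i : Fin k) :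
    (Finset.univ.filter (fun v => c v ≠ i)).card + sz c i = Fintype.card V := by
  have := Finset.card_filter_add_card_filter_not (s := (Finset.univ : Finset V)) (fun v => c v = i)
  rw [Finset.card_univ] at this
  unfold sz
  rw [add_comm]
  exact this

lemma gut_complete {V : Type*} [Fintype V] (G : SimpleGraph V) {k : ℕ} (c : V → Fin k)
    (hadj : ∀ u v, G.Adj u v ↔ c u ≠ c v) (hlt : ∀ i, sz c i < Fintype.card V) (a b : ℝ) :
    2 * gut G a b = FF (Fintype.card V) a ((2 : ℝ) ^ b) (sz c) := by
  rw [← gB_eq]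
  unfold gut
  congr 1
  apply Finset.sum_congr rfl
  intro e he
  induction e using Sym2.ind with
  | _ u v =>
  simp only [Finset.mem_filter, Finset.mem_univ, true_and, Sym2.mk_isDiag_iff] at he
  simp only [gterm, Sym2.lift_mk]
  have hdeg : ∀ u, (G.degree u : ℝ) = (Fintype.card V : ℝ) - sz c (c u) := by
    intro u
    have h := card_ne c (c u)
    have : G.degree u = (Finset.univ.filter (fun v => c v ≠ c u)).card := by
      rw [← SimpleGraph.card_neighborFinset_eq_degree]
      congr 1
      ext w
      simp [hadj, eq_comm]
    rw [this, ← h]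
    push_cast
    ring
  have hpos : ∀ i, (0 : ℝ) ≤ (Fintype.card V : ℝ) - sz c i := by
    intro i
    have : (sz c i : ℝ) < Fintype.card V := by exact_mod_cast hlt i
    linarith
  rw [hdeg, hdeg, Real.mul_rpow (hpos _) (hpos _)]
  simp only [wt]
  congr 1
  split_ifs with h
  · have hex : ∃ w, c w ≠ c u := by
      by_contra! hcon
      have h1 := card_ne c (c u)
      have h2 := hlt (c u)
      rw [Finset.filter_false_of_mem (by simpa using hcon)] at h1
      simp at h1
      omega
    obtain ⟨w, hw⟩ := hex
    have a1 : G.Adj u w := (hadj _ _).2 hw.symm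
    have a2 : G.Adj w v := (hadj _ _).2 (h ▸ hw)
    have hle : G.dist u v ≤ 2 :=
      SimpleGraph.dist_le (SimpleGraph.Walk.cons a1 (SimpleGraph.Walk.cons a2 SimpleGraph.Walk.nil))
    have h0 : G.dist u v ≠ 0 := by
      intro h0
      exact he (((a1.reachable.trans a2.reachable).dist_eq_zero_iff).1 h0)
    have h1 : G.dist u v ≠ 1 := by
      rw [Ne, SimpleGraph.dist_eq_one_iff_adj, hadj]
      simpa using h
    have : G.dist u v = 2 := by omega
    rw [this]; norm_num
  · have : G.dist u v = 1 := SimpleGraph.dist_eq_one_iff_adj.2 ((hadj _ _).2 h)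
    rw [this]; simp

lemma deg_facts {V : Type*} [Fintype V] (G : SimpleGraph V) (hG : G.Connected)
    (hn : 2 ≤ Fintype.card V) {k : ℕ} (c : V → Fin k) (hc : ∀ u v, G.Adj u v → c u ≠ c v) (u : V) :
    1 ≤ G.degree u ∧ G.degree u + sz c (c u) ≤ Fintype.card V := by
  have : Nontrivial V := Fintype.one_lt_card_iff_nontrivial.1 (by omega)
  refine ⟨hG.preconnected.degree_pos_of_nontrivial u, ?_⟩
  rw [← card_ne c (c u)]
  apply Nat.add_le_add_right
  rw [← SimpleGraph.card_neighborFinset_eq_degree]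
  apply Finset.card_le_card
  intro w hw
  simp at hw ⊢
  exact (hc _ _ hw).symm

lemma term_le {V : Type*} [Fintype V] (G : SimpleGraph V) (hG : G.Connected)
    (hn : 2 ≤ Fintype.card V) {k : ℕ} (c : V → Fin k) (hc : ∀ u v, G.Adj u v → c u ≠ c v)
    {a b : ℝ} (ha : 0 ≤ a) (hb : b ≤ 0) (u v : V) (huv : u ≠ v) :
    ((G.degree u : ℝ) * (G.degree v : ℝ)) ^ a * ((G.dist u v : ℝ)) ^ b ≤
      gterm c a ((2 : ℝ) ^ b) s(u, v) ∧
    ((a ≠ 0 ∨ b ≠ 0) → ((G.degree u : ℝ) * (G.degree v : ℝ)) ^ a * ((G.dist u v : ℝ)) ^ b =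
      gterm c a ((2 : ℝ) ^ b) s(u, v) → c u ≠ c v → G.Adj u v) := by
  obtain ⟨du1, du2⟩ := deg_facts G hG hn c hc u
  obtain ⟨dv1, dv2⟩ := deg_facts G hG hn c hc v
  have du1' : (1 : ℝ) ≤ G.degree u := by exact_mod_cast du1
  have dv1' : (1 : ℝ) ≤ G.degree v := by exact_mod_cast dv1
  have du2' : (G.degree u : ℝ) ≤ (Fintype.card V : ℝ) - sz c (c u) := by
    rw [le_sub_iff_add_le]; exact_mod_cast du2
  have dv2' : (G.degree v : ℝ) ≤ (Fintype.card V : ℝ) - sz c (c v) := by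
    rw [le_sub_iff_add_le]; exact_mod_cast dv2
  have hdist : 1 ≤ G.dist u v := hG.pos_dist_of_ne huv
  have hdist' : (1 : ℝ) ≤ G.dist u v := by exact_mod_cast hdist
  simp only [gterm, Sym2.lift_mk, wt]
  rw [← Real.mul_rpow (by linarith) (by linarith)]
  have hmul : (G.degree u : ℝ) * G.degree v ≤
      ((Fintype.card V : ℝ) - sz c (c u)) * ((Fintype.card V : ℝ) - sz c (c v)) :=
    mul_le_mul du2' dv2' (by linarith) (by linarith)
  have hA : ((G.degree u : ℝ) * G.degree v) ^ a ≤
      (((Fintype.card V : ℝ) - sz c (c u)) * ((Fintype.card V : ℝ) - sz c (c v))) ^ a :=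
    Real.rpow_le_rpow (by positivity) hmul ha
  have hA0 : 0 < ((G.degree u : ℝ) * G.degree v) ^ a :=
    Real.rpow_pos_of_pos (by nlinarith) _
  have hB0 : 0 < (G.dist u v : ℝ) ^ b := Real.rpow_pos_of_pos (by linarith) _
  have hB : (G.dist u v : ℝ) ^ b ≤ if c u = c v then (2 : ℝ) ^ b else 1 := by
    split_ifs with h
    · apply Real.rpow_le_rpow_of_nonpos (by norm_num) _ hb
      have h1 : G.dist u v ≠ 1 := by
        rw [Ne, SimpleGraph.dist_eq_one_iff_adj]
        exact fun h' => hc _ _ h' h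
      have : 2 ≤ G.dist u v := by omega
      exact_mod_cast this
    · exact Real.rpow_le_one_of_one_le_of_nonpos hdist' hb
  refine ⟨mul_le_mul hA hB hB0.le (hA0.le.trans hA), ?_⟩
  intro hab heq hne
  rw [if_neg hne] at heq hB
  rcases hab with h | h
  · -- degrees are maximal
    have hAeq : ((G.degree u : ℝ) * G.degree v) ^ a =
      (((Fintype.card V : ℝ) - sz c (c u)) * ((Fintype.card V : ℝ) - sz c (c v))) ^ a := by
      apply le_antisymm hA
      nlinarith
    have hm := (Real.rpow_left_inj (by positivity)
      (mul_nonneg (by linarith) (by linarith)) h).1 hAeq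
    have hdu : (G.degree u : ℝ) = (Fintype.card V : ℝ) - sz c (c u) := by
      apply le_antisymm du2'
      nlinarith
    have hdu' : G.degree u + sz c (c u) = Fintype.card V := by
      have : (G.degree u : ℝ) + sz c (c u) = Fintype.card V := by linarith
      exact_mod_cast this
    have hsub : G.neighborFinset u = Finset.univ.filter (fun w => c w ≠ c u) := by
      apply Finset.eq_of_subset_of_card_le
      · intro w hw
        simp at hw ⊢
        exact (hc _ _ hw).symm
      · have := card_ne c (c u)
        rw [SimpleGraph.card_neighborFinset_eq_degree]
        omega
    have : v ∈ G.neighborFinset u := by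
      rw [hsub]; simpa using hne.symm
    simpa using this
  · have hBeq : (G.dist u v : ℝ) ^ b = 1 := by
      apply le_antisymm hB
      have hpos := hA0.trans_le hA
      by_contra! hlt
      have := mul_lt_mul' hA hlt hB0.le hpos
      linarith
    rw [← SimpleGraph.dist_eq_one_iff_adj]
    by_contra h1
    have h2 : (1 : ℝ) < G.dist u v := by
      have : 1 < G.dist u v := by omega
      exact_mod_cast this
    have := Real.rpow_lt_one_of_one_lt_of_neg h2 (lt_of_le_of_ne hb h)
    linarith

lemma gut_le {V : Type*} [Fintype V] (G : SimpleGraph V) (hG : G.Connected)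
    (hn : 2 ≤ Fintype.card V) {k : ℕ} (c : V → Fin k) (hc : ∀ u v, G.Adj u v → c u ≠ c v)
    {a b : ℝ} (ha : 0 ≤ a) (hb : b ≤ 0) (hab : a ≠ 0 ∨ b ≠ 0) :
    2 * gut G a b ≤ FF (Fintype.card V) a ((2 : ℝ) ^ b) (sz c) ∧
    (2 * gut G a b = FF (Fintype.card V) a ((2 : ℝ) ^ b) (sz c) →
      ∀ u v, G.Adj u v ↔ c u ≠ c v) := by
  rw [← gB_eq]
  have hle : ∀ e ∈ Finset.univ.filter (fun e : Sym2 V => ¬ e.IsDiag),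
    Sym2.lift ⟨fun u v =>
      ((G.degree u : ℝ) * (G.degree v : ℝ)) ^ a * ((G.dist u v : ℝ)) ^ b,
      fun u v => by beta_reduce; rw [mul_comm ((G.degree u : ℝ)), SimpleGraph.dist_comm]⟩ e ≤
      gterm c a ((2 : ℝ) ^ b) e := by
    intro e he
    induction e using Sym2.ind with
    | _ u v =>
    simp only [Finset.mem_filter, Finset.mem_univ, true_and, Sym2.mk_isDiag_iff] at he
    exact (term_le G hG hn c hc ha hb u v he).1
  constructor
  · unfold gut
    have := Finset.sum_le_sum hle
    linarith
  · intro heq u v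
    refine ⟨hc u v, fun hne => ?_⟩
    have huv : u ≠ v := by rintro rfl; exact hne rfl
    have heq' := mul_left_cancel₀ two_ne_zero heq
    unfold gut at heq'
    have := (Finset.sum_eq_sum_iff_of_le hle).1 heq' s(u, v) (by simpa using huv)
    exact (term_le G hG hn c hc ha hb u v huv).2 hab this hne

lemma iso_of {V : Type*} [Fintype V] (G : SimpleGraph V) {k : ℕ} (c : V → Fin k)
    (hadj : ∀ u v, G.Adj u v ↔ c u ≠ c v) (p : Fin k → ℕ) (σ : Equiv.Perm (Fin k))
    (h : sz c = p ∘ σ) :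
    Nonempty (G ≃g SimpleGraph.completeMultipartiteGraph (fun i => Fin (p i))) := by
  have e : ∀ i, Nonempty ({v // c v = i} ≃ Fin (p (σ i))) := by
    intro i
    rw [← Fintype.card_eq, Fintype.card_subtype, Fintype.card_fin]
    exact congrFun h i
  replace e := fun i => (e i).some
  refine ⟨⟨(Equiv.sigmaFiberEquiv c).symm.trans (Equiv.sigmaCongr σ e), ?_⟩⟩
  intro u v
  rw [hadj]
  simp [SimpleGraph.completeMultipartiteGraph, Equiv.sigmaFiberEquiv, Equiv.sigmaCongr]

lemma sz_of_equiv {V : Type*} [Fintype V] {k : ℕ} (p : Fin k → ℕ) (φ : V ≃ Σ i, Fin (p i)) :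
    sz (fun v => (φ v).1) = p := by
  ext i
  unfold sz
  rw [← Fintype.card_subtype]
  conv_rhs => rw [← Fintype.card_fin (p i)]
  apply Fintype.card_congr
  exact (φ.subtypeEquiv (q := fun s => s.1 = i) (fun v => Iff.rfl)).trans
    (Equiv.sigmaSubtype i)


theorem stmt9 {V : Type*} [Fintype V] (G : SimpleGraph V) (n : ℕ)
    (hn : n = Fintype.card V) (hG : G.Connected)
    (a b : ℝ) (ha : 0 ≤ a) (ha2 : a < 1 / 2) (hb : b ≤ 0) (hab : a ≠ 0 ∨ b ≠ 0)
    (k : ℕ) (hk2 : 2 ≤ k) (hkn : k ≤ n) (hkpart : G.Colorable k)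
    (p : Fin k → ℕ) (hsum : ∑ i, p i = n)
    (hbal : ∀ i j, |(p i : ℤ) - (p j : ℤ)| ≤ 1) :
    gut G a b ≤ gut (SimpleGraph.completeMultipartiteGraph (fun i => Fin (p i))) a b ∧
    (gut G a b = gut (SimpleGraph.completeMultipartiteGraph (fun i => Fin (p i))) a b ↔
      Nonempty (G ≃g SimpleGraph.completeMultipartiteGraph (fun i => Fin (p i)))) := by
  have hpb : ∀ i j, p i ≤ p j + 1 := by
    intro i j
    have := abs_le.1 (hbal i j)
    omega
  have hk0 : 0 < k := by omega
  have hcard : Fintype.card (Σ i, Fin (p i)) = n := by simp [hsum]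
  have hpn : ∀ i, p i < n := by
    intro i
    by_contra! hi
    have : Nontrivial (Fin k) := Fin.nontrivial_iff_two_le.2 hk2
    obtain ⟨j, hj⟩ := exists_ne i
    have h1 := sum_split p hj.symm
    have h2 := hpb i j
    omega
  have hβ0 : (0 : ℝ) < (2 : ℝ) ^ b := Real.rpow_pos_of_pos two_pos _
  have hβ1 : (2 : ℝ) ^ b ≤ 1 := Real.rpow_le_one_of_one_le_of_nonpos one_le_two hb
  have hab' : a ≠ 0 ∨ (2 : ℝ) ^ b ≠ 1 := by
    refine hab.imp_right fun h => ?_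
    exact (Real.rpow_lt_one_of_one_lt_of_neg one_lt_two (lt_of_le_of_ne hb h)).ne
  -- the value for the balanced graph
  have hK : 2 * gut (SimpleGraph.completeMultipartiteGraph (fun i => Fin (p i))) a b =
      FF n a ((2 : ℝ) ^ b) p := by
    have hsz : sz (fun v : Σ i, Fin (p i) => v.1) = p := sz_of_equiv p (Equiv.refl _)
    have := gut_complete (SimpleGraph.completeMultipartiteGraph (fun i => Fin (p i)))
      (fun v => v.1) (fun u v => by simp [SimpleGraph.completeMultipartiteGraph])
      (by rw [hsz, hcard]; exact hpn) a b
    rw [hsz, hcard] at this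
    exact this
  obtain ⟨C⟩ := hkpart
  have hc : ∀ u v, G.Adj u v → C u ≠ C v := fun u v h => C.valid h
  have hV : 2 ≤ Fintype.card V := by omega
  obtain ⟨hle, heq⟩ := gut_le G hG hV C hc ha hb hab
  rw [← hn] at hle heq
  have hszlt : ∀ l, sz C l < n := by
    intro l
    rcases Nat.eq_zero_or_pos (sz C l) with h | h
    · omega
    · obtain ⟨u, hu⟩ := Finset.card_pos.1 h
      have hu' : C u = l := (Finset.mem_filter.1 hu).2
      have := deg_facts G hG hV C hc u
      rw [hu'] at this
      omega
  obtain ⟨hmax, hmaxeq⟩ := FF_max hk0 n ha (by linarith) hβ0 hβ1 hab' p hsum hpb _ (sz C) rfl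
    (by rw [sz_sum, hn]) hszlt
  refine ⟨by linarith, ?_, ?_⟩
  · intro h
    obtain ⟨σ, hσ⟩ := hmaxeq (by linarith)
    exact iso_of G C (heq (by linarith)) p σ hσ
  · rintro ⟨φ⟩
    have hsz := sz_of_equiv p φ.toEquiv
    have := gut_complete G (fun v => (φ.toEquiv v).1) (fun u v => by
      rw [← φ.map_adj_iff]; simp [SimpleGraph.completeMultipartiteGraph])
      (by rw [hsz, ← hn]; exact hpn) a b
    rw [hsz, ← hn] at this
    linarith
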